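/- Let (S, stepS, finalS) be a source transition system and (T, stepT, finalT) a deterministic target transition system over the same result type R (deterministic: stepT ς ς1 and stepT ς ς2 imply ς1 = ς2; finalT ς r implies ς is stuck; finalT ς r1 and finalT ς r2 imply r1 = r2). Let ~ : S → T → Prop and a well-founded relation ≺ on S form a measured forward simulation: whenever σ1 ~ ς1 and stepS σ1 σ2, either there exists ς2 with stepT+ ς1 ς2 and σ2 ~ ς2, or σ2 ~ ς1 and σ2 ≺ σ1; and whenever σ ~ ς and finalS σ r, there exists ς' with stepT* ς ς' and finalT ς' r. Suppose σ0 ~ ς0 and σ0 is safe. Then (classically, using dependent choice) if ς0 diverges in the target system, σ0 diverges in the source system. -/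

import Mathlib

def Stuck {S : Type*} (step : S → S → Prop) (s : S) : Prop :=
  ¬ ∃ s', step s s'

def Terminates {S R : Type*} (step : S → S → Prop) (final : S → R → Prop)
    (s : S) (r : R) : Prop :=
  ∃ s', Relation.ReflTransGen step s s' ∧ final s' r

def Diverges {S : Type*} (step : S → S → Prop) (s : S) : Prop :=
  ∃ f : ℕ → S, f 0 = s ∧ ∀ n, step (f n) (f (n + 1))

def GoesWrong {S R : Type*} (step : S → S → Prop) (final : S → R → Prop)
    (s : S) : Prop :=
  ∃ s', Relation.ReflTransGen step s s' ∧ Stuck step s' ∧ ¬ ∃ r, final s' r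

def Safe {S R : Type*} (step : S → S → Prop) (final : S → R → Prop)
    (s : S) : Prop :=
  ∀ s', Relation.ReflTransGen step s s' → (∃ s'', step s' s'') ∨ ∃ r, final s' r

/-!
Divergence is the failure of well-foundedness of the reversed step relation, so every state with
a property `P` diverges as soon as each state with `P` has a successor with `P`. Take for `P`: being
safe and related to some diverging target state. A state with `P` cannot be final, since its target
match would then reach a stuck state, whereas in a deterministic system everything reachable from a
diverging state diverges. So it steps, and the match of any successor is again diverging.
-/

open Relation

section TransitionSystem

variable {S R : Type*} {step : S → S → Prop} {final : S → R → Prop} {s t : S}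

theorem Safe.of_reflTransGen (hs : Safe step final s) (hst : ReflTransGen step s t) :
    Safe step final t :=
  fun u htu => hs u (hst.trans htu)

theorem Stuck.not_diverges (hs : Stuck step s) : ¬ Diverges step s := by
  rintro ⟨f, rfl, hf⟩
  exact hs ⟨f 1, hf 0⟩

theorem diverges_iff_not_acc : Diverges step s ↔ ¬ Acc (Function.swap step) s :=
  (not_acc_iff_exists_descending_chain (r := Function.swap step)).symm

theorem diverges_of_forall_exists_step {P : S → Prop}
    (hP : ∀ s, P s → ∃ t, step s t ∧ P t) (hs : P s) : Diverges step s := by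
  refine diverges_iff_not_acc.mpr fun hacc => ?_
  induction hacc with
  | intro s _ ih =>
    obtain ⟨t, hst, ht⟩ := hP s hs
    exact ih t hst ht

theorem Diverges.of_reflTransGen (hdet : Relator.RightUnique step)
    (hs : Diverges step s) (hst : ReflTransGen step s t) : Diverges step t := by
  induction hst with
  | refl => exact hs
  | tail _ hbc ih =>
    obtain ⟨f, rfl, hf⟩ := ih
    exact ⟨fun n => f (n + 1), hdet (hf 0) hbc, fun n => hf (n + 1)⟩

end TransitionSystem

theorem backward_divergence_general {S T R : Type*} {stepS : S → S → Prop}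
    {finalS : S → R → Prop} {stepT : T → T → Prop} {sim : S → T → Prop}
    (hdet : Relator.RightUnique stepT)
    (hstep : ∀ σ₁ ς₁ σ₂, sim σ₁ ς₁ → stepS σ₁ σ₂ → ∃ ς₂, ReflTransGen stepT ς₁ ς₂ ∧ sim σ₂ ς₂)
    (hfinal : ∀ σ ς r, sim σ ς → finalS σ r → ∃ ς', ReflTransGen stepT ς ς' ∧ Stuck stepT ς')
    {σ₀ : S} {ς₀ : T} (hsim : sim σ₀ ς₀) (hsafe : Safe stepS finalS σ₀)
    (hdiv : Diverges stepT ς₀) : Diverges stepS σ₀ := by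
  refine diverges_of_forall_exists_step
    (P := fun σ => Safe stepS finalS σ ∧ ∃ ς, sim σ ς ∧ Diverges stepT ς) ?_
    ⟨hsafe, ς₀, hsim, hdiv⟩
  rintro σ ⟨hsafe, ς, hsim, hdiv⟩
  have not_final : ¬ ∃ r, finalS σ r := by
    rintro ⟨r, hr⟩
    obtain ⟨ς', hς, hstuck⟩ := hfinal σ ς r hsim hr
    exact hstuck.not_diverges (hdiv.of_reflTransGen hdet hς)
  obtain ⟨σ', hσ⟩ := (hsafe σ .refl).resolve_right not_final
  obtain ⟨ς', hς, hsim'⟩ := hstep σ ς σ' hsim hσ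
  exact ⟨σ', hσ, hsafe.of_reflTransGen (.single hσ), ς', hsim', hdiv.of_reflTransGen hdet hς⟩

/-- backward preservation of divergence for measured forward
simulations into a deterministic target. -/
theorem backward_divergence {S T R : Type*}
    (stepS : S → S → Prop) (finalS : S → R → Prop)
    (stepT : T → T → Prop) (finalT : T → R → Prop)
    (hdetT : ∀ ς ς1 ς2, stepT ς ς1 → stepT ς ς2 → ς1 = ς2)
    (hfinalStuckT : ∀ ς r, finalT ς r → Stuck stepT ς)
    (hfinalDetT : ∀ ς r1 r2, finalT ς r1 → finalT ς r2 → r1 = r2)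
    (sim : S → T → Prop) (lt : S → S → Prop) (hwf : WellFounded lt)
    (hstep : ∀ σ1 ς1 σ2, sim σ1 ς1 → stepS σ1 σ2 →
      (∃ ς2, Relation.TransGen stepT ς1 ς2 ∧ sim σ2 ς2) ∨
      (sim σ2 ς1 ∧ lt σ2 σ1))
    (hfinal : ∀ σ ς r, sim σ ς → finalS σ r →
      ∃ ς', Relation.ReflTransGen stepT ς ς' ∧ finalT ς' r)
    (σ0 : S) (ς0 : T) (hsim : sim σ0 ς0) (hsafe : Safe stepS finalS σ0) :
    Diverges stepT ς0 → Diverges stepS σ0 := by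
  exact backward_divergence_general (sim := sim) hdetT
    (fun _ ς₁ _ hsim hσ => (hstep _ ς₁ _ hsim hσ).elim
      (Exists.imp fun _ => And.imp_left TransGen.to_reflTransGen) fun h => ⟨ς₁, .refl, h.1⟩)
    (fun _ _ r hsim hr => (hfinal _ _ r hsim hr).imp fun ς => And.imp_right (hfinalStuckT ς r))
    hsim hsafe
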